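/- arXiv:2308.12897 — 5 statements merged into one kernel-verified Lean document; each statement's English description precedes it below -/
import Mathlib

section
/- Let 0 → C_k → C_{k−1} → ⋯ → C_1 → C_0 → 0 be an exact sequence of finitely generated free ℤ-modules, and let (f_i : C_i → C_i)_{i=0,…,k} be a chain endomorphism, i.e. a family of ℤ-linear maps commuting with the differentials. Then the alternating products of determinants agree: ∏_{i even} det(f_i) = ∏_{i odd} det(f_i). -/
/- An exact sequence `0 → C_k → C_{k−1} → ⋯ → C_1 → C_0 → 0` of finitely generated free
`ℤ`-modules is encoded by a family `C : ℕ → Type` (only the indices `0, …, k` are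
relevant), with differentials `d i : C (i+1) →ₗ[ℤ] C i` (the paper's `d_{i+1}`),
injective at the top (`d (k-1) : C k → C (k-1)`), surjective at the bottom
(`d 0 : C 1 → C 0`), and exact at every interior module.  A chain endomorphism is a
family `f i : C i →ₗ[ℤ] C i` commuting with the differentials. -/

/-! A section `s : N → M` of the bottom map turns an exact sequence `⋯ → C₂ → C₁ → M → N → 0` into
the exact sequence `⋯ → C₂ → C₁ × N → M → 0`, which is one term shorter. The endomorphisms `a` of
`M` and `b` of `N` do not respect `s`, but `a ∘ s - s ∘ b` lifts along `C₁ → M`, and with the lift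
as off-diagonal block the endomorphism of `C₁ × N` becomes block triangular, of determinant
`det f₁ * det b`. Iterating leaves a short exact sequence, where determinants are multiplicative.
Over a general commutative ring the kernels of the differentials need not be free, but only products
of the modules of the complex ever occur. -/

universe v

section ShortExact

variable {R K M N : Type*} [CommRing R] [AddCommGroup K] [AddCommGroup M] [AddCommGroup N]
  [Module R K] [Module R M] [Module R N]

theorem det_eq_det_mul_det_of_exact [Module.Free R K] [Module.Finite R K] [Module.Free R N]
    [Module.Finite R N] {i : K →ₗ[R] M} {q : M →ₗ[R] N} (hi : Function.Injective i)
    (hiq : Function.Exact i q) (hq : Function.Surjective q)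
    {c : K →ₗ[R] K} {a : M →ₗ[R] M} {b : N →ₗ[R] N}
    (hci : i ∘ₗ c = a ∘ₗ i) (haq : q ∘ₗ a = b ∘ₗ q) :
    LinearMap.det a = LinearMap.det c * LinearMap.det b := by
  let eK : K ≃ₗ[R] LinearMap.range i := LinearEquiv.ofInjective i hi
  let eN : (M ⧸ LinearMap.range i) ≃ₗ[R] N := hiq.linearEquivOfSurjective hq
  have : Module.Free R (LinearMap.range i) := .of_equiv eK
  have : Module.Finite R (LinearMap.range i) := .equiv eK
  have : Module.Free R (M ⧸ LinearMap.range i) := .of_equiv eN.symm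
  have : Module.Finite R (M ⧸ LinearMap.range i) := .equiv eN.symm
  have : Module.Finite R M := .of_submodule_quotient (LinearMap.range i)
  have ha : LinearMap.range i ≤ (LinearMap.range i).comap a := by
    rintro _ ⟨x, rfl⟩
    exact ⟨c x, LinearMap.congr_fun hci x⟩
  have hsub : a.restrict ha = eK.toLinearMap ∘ₗ c ∘ₗ eK.symm.toLinearMap := by
    rw [← LinearMap.comp_assoc, LinearEquiv.eq_comp_toLinearMap_symm]
    ext x
    exact (LinearMap.congr_fun hci x).symm
  have hquot : b = eN.toLinearMap ∘ₗ (LinearMap.range i).mapQ _ a ha ∘ₗ eN.symm.toLinearMap := by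
    rw [← LinearMap.comp_assoc, LinearEquiv.eq_comp_toLinearMap_symm]
    ext x
    exact (LinearMap.congr_fun haq x).symm
  rw [LinearMap.det_eq_det_mul_det (LinearMap.range i) a ha, hsub, LinearMap.det_conj, hquot,
    LinearMap.det_conj]

/-- The endomorphism of `K × N` with matrix `!![c, h; 0, b]`, used on the product that replaces
`K` when the bottom map `M → N` of a complex `⋯ → K → M → N → 0` is split off. -/
def blockTriangular (c : K →ₗ[R] K) (h : N →ₗ[R] K) (b : N →ₗ[R] N) : K × N →ₗ[R] K × N :=
  (c.coprod h).prod (b ∘ₗ LinearMap.snd R K N)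

theorem blockTriangular_comp_inl (c : K →ₗ[R] K) (h : N →ₗ[R] K) (b : N →ₗ[R] N) :
    blockTriangular c h b ∘ₗ LinearMap.inl R K N = LinearMap.inl R K N ∘ₗ c := by
  ext <;> simp [blockTriangular]

theorem det_blockTriangular [Module.Free R K] [Module.Finite R K] [Module.Free R N]
    [Module.Finite R N] (c : K →ₗ[R] K) (h : N →ₗ[R] K) (b : N →ₗ[R] N) :
    LinearMap.det (blockTriangular c h b) = LinearMap.det c * LinearMap.det b :=
  det_eq_det_mul_det_of_exact LinearMap.inl_injective .inl_snd LinearMap.snd_surjective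
    (blockTriangular_comp_inl c h b).symm (LinearMap.snd_prod _ _)

theorem coprod_comp_blockTriangular {p : K →ₗ[R] M} {s : N →ₗ[R] M} {c : K →ₗ[R] K}
    {h : N →ₗ[R] K} {a : M →ₗ[R] M} {b : N →ₗ[R] N} (hpa : p ∘ₗ c = a ∘ₗ p)
    (hh : p ∘ₗ h = a ∘ₗ s - s ∘ₗ b) :
    p.coprod s ∘ₗ blockTriangular c h b = a ∘ₗ p.coprod s := by
  ext x
  · simpa [blockTriangular] using LinearMap.congr_fun hpa x
  · simpa [blockTriangular] using eq_sub_iff_add_eq.1 (LinearMap.congr_fun hh x)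

theorem surjective_coprod_of_exact {p : K →ₗ[R] M} {q : M →ₗ[R] N} {s : N →ₗ[R] M}
    (hpq : Function.Exact p q) (hs : q ∘ₗ s = LinearMap.id) :
    Function.Surjective (p.coprod s) := by
  intro y
  have hqs : ∀ z, q (s z) = z := LinearMap.congr_fun hs
  obtain ⟨x, hx⟩ : ∃ x, p x = y - s (q y) := (hpq _).1 (by simp [hqs])
  exact ⟨(x, q y), by simp [hx]⟩

theorem exact_inl_comp_coprod {L : Type*} [AddCommGroup L] [Module R L] {r : L →ₗ[R] K}
    {p : K →ₗ[R] M} {q : M →ₗ[R] N} {s : N →ₗ[R] M} (hrp : Function.Exact r p)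
    (hqp : q ∘ₗ p = 0) (hs : q ∘ₗ s = LinearMap.id) :
    Function.Exact (LinearMap.inl R K N ∘ₗ r) (p.coprod s) := by
  have hqs : ∀ z, q (s z) = z := LinearMap.congr_fun hs
  have hqp' : ∀ x, q (p x) = 0 := LinearMap.congr_fun hqp
  rintro ⟨x, z⟩
  constructor
  · intro hxz
    obtain rfl : z = 0 := by simpa [hqp', hqs] using congrArg q hxz
    obtain ⟨w, rfl⟩ := (hrp x).1 (by simpa using hxz)
    exact ⟨w, rfl⟩
  · rintro ⟨w, hw⟩
    obtain ⟨rfl, rfl⟩ := Prod.mk.inj hw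
    simp [hrp.apply_apply_eq_zero]

theorem exists_comp_eq_of_exact {P : Type*} [AddCommGroup P] [Module R P] [Module.Projective R P]
    {p : K →ₗ[R] M} {q : M →ₗ[R] N} (hpq : Function.Exact p q) {g : P →ₗ[R] M}
    (hg : q ∘ₗ g = 0) : ∃ h : P →ₗ[R] K, p ∘ₗ h = g := by
  have hmem : ∀ x, g x ∈ LinearMap.range p := fun x ↦ (hpq _).1 (LinearMap.congr_fun hg x)
  obtain ⟨h, hh⟩ := Module.projective_lifting_property p.rangeRestrict (g.codRestrict _ hmem)
    p.surjective_rangeRestrict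
  exact ⟨h, LinearMap.ext fun x ↦ congrArg Subtype.val (LinearMap.congr_fun hh x)⟩

end ShortExact

section ProdRange

variable {M : Type*} [CommMonoid M]

theorem prod_range_succ_filter_even (u : ℕ → M) (n : ℕ) :
    ∏ i ∈ Finset.range (n + 1) with Even i, u i =
      u 0 * ∏ i ∈ Finset.range n with Odd i, u (i + 1) := by
  simp [Finset.prod_filter, Finset.prod_range_succ', Nat.even_add_one, mul_comm]

theorem prod_range_succ_filter_odd (u : ℕ → M) (n : ℕ) :
    ∏ i ∈ Finset.range (n + 1) with Odd i, u i = ∏ i ∈ Finset.range n with Even i, u (i + 1) := by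
  simp [Finset.prod_filter, Finset.prod_range_succ', Nat.odd_add_one]

end ProdRange

/-- The sequence is `0 → C (m + 1) → ⋯ → C 1 → M → N → 0`; `C 0` enters only through
`ker p = ker (d 0)`, which lets a single family `d` express both injectivity at the top and
exactness at `C 1`. -/
theorem det_mul_prod_odd_eq_det_mul_prod_even {R : Type*} [CommRing R] (m : ℕ)
    (C : ℕ → Type v) [∀ i, AddCommGroup (C i)] [∀ i, Module R (C i)]
    (hfree : ∀ i ≤ m, Module.Free R (C (i + 1))) (hfin : ∀ i ≤ m, Module.Finite R (C (i + 1)))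
    (d : ∀ i, C (i + 1) →ₗ[R] C i) (hinj : Function.Injective (d m))
    (hexact : ∀ i < m, Function.Exact (d (i + 1)) (d i))
    (f : ∀ i, C i →ₗ[R] C i)
    (hcomm : ∀ i < m, d (i + 1) ∘ₗ f (i + 2) = f (i + 1) ∘ₗ d (i + 1))
    {M N : Type v} [AddCommGroup M] [AddCommGroup N] [Module R M] [Module R N]
    [Module.Free R M] [Module.Finite R M] [Module.Free R N] [Module.Finite R N]
    {p : C 1 →ₗ[R] M} {q : M →ₗ[R] N} (hp : LinearMap.ker p = LinearMap.ker (d 0))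
    (hpq : Function.Exact p q) (hq : Function.Surjective q)
    {a : M →ₗ[R] M} {b : N →ₗ[R] N} (hpa : p ∘ₗ f 1 = a ∘ₗ p) (hqb : q ∘ₗ a = b ∘ₗ q) :
    LinearMap.det a * ∏ i ∈ Finset.range (m + 1) with Odd i, LinearMap.det (f (i + 1)) =
      LinearMap.det b * ∏ i ∈ Finset.range (m + 1) with Even i, LinearMap.det (f (i + 1)) := by
  have : Module.Free R (C 1) := hfree 0 m.zero_le
  have : Module.Finite R (C 1) := hfin 0 m.zero_le
  induction m generalizing C M N with
  | zero =>
    have hpinj : Function.Injective p := by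
      rw [← LinearMap.ker_eq_bot, hp, LinearMap.ker_eq_bot]
      exact hinj
    simp [Finset.prod_filter, det_eq_det_mul_det_of_exact hpinj hpq hq hpa hqb, mul_comm]
  | succ m ih =>
    obtain ⟨s, hs⟩ := q.exists_rightInverse_of_surjective (LinearMap.range_eq_top.2 hq)
    obtain ⟨h, hh⟩ : ∃ h : N →ₗ[R] C 1, p ∘ₗ h = a ∘ₗ s - s ∘ₗ b := by
      refine exists_comp_eq_of_exact hpq ?_
      rw [LinearMap.comp_sub, ← LinearMap.comp_assoc, hqb, LinearMap.comp_assoc, hs,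
        ← LinearMap.comp_assoc, hs, LinearMap.id_comp, LinearMap.comp_id, sub_self]
    have hdp : Function.Exact (d 1) p := by
      rw [LinearMap.exact_iff, hp, ← LinearMap.exact_iff]
      exact hexact 0 m.succ_pos
    have hker : LinearMap.ker (LinearMap.inl R (C 1) N ∘ₗ d 1) = LinearMap.ker (d 1) :=
      LinearMap.ker_comp_of_ker_eq_bot _ (LinearMap.ker_eq_bot.2 LinearMap.inl_injective)
    have hde : (LinearMap.inl R (C 1) N ∘ₗ d 1) ∘ₗ f 2 =
        blockTriangular (f 1) h b ∘ₗ LinearMap.inl R (C 1) N ∘ₗ d 1 := by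
      rw [LinearMap.comp_assoc, hcomm 0 m.succ_pos, ← LinearMap.comp_assoc,
        ← blockTriangular_comp_inl, LinearMap.comp_assoc]
    have hfold := ih (fun i ↦ C (i + 1)) (fun i hi ↦ hfree (i + 1) (by lia))
      (fun i hi ↦ hfin (i + 1) (by lia)) (fun i ↦ d (i + 1)) hinj
      (fun i hi ↦ hexact (i + 1) (by lia)) (fun i ↦ f (i + 1))
      (fun i hi ↦ hcomm (i + 1) (by lia)) hker
      (exact_inl_comp_coprod hdp hpq.linearMap_comp_eq_zero hs)
      (surjective_coprod_of_exact hpq hs) hde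
      (coprod_comp_blockTriangular hpa hh) (hfree 1 (by lia)) (hfin 1 (by lia))
    rw [det_blockTriangular] at hfold
    rw [prod_range_succ_filter_even _ (m + 1), prod_range_succ_filter_odd _ (m + 1), ← hfold]
    ring

theorem alternating_det_prod_eq_general {R : Type*} [CommRing R] (k : ℕ) (hk : 1 ≤ k)
    (C : ℕ → Type v) [∀ i, AddCommGroup (C i)] [∀ i, Module R (C i)]
    (hfree : ∀ i, i ≤ k → Module.Free R (C i))
    (hfin : ∀ i, i ≤ k → Module.Finite R (C i))
    (d : ∀ i, C (i + 1) →ₗ[R] C i)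
    (hinj : Function.Injective (d (k - 1)))
    (hsurj : Function.Surjective (d 0))
    (hexact : ∀ i, i + 1 < k → Function.Exact (d (i + 1)) (d i))
    (f : ∀ i, C i →ₗ[R] C i)
    (hcomm : ∀ i, i < k → (d i) ∘ₗ (f (i + 1)) = (f i) ∘ₗ (d i)) :
    ∏ i ∈ Finset.range (k + 1) with Even i, LinearMap.det (f i) =
      ∏ i ∈ Finset.range (k + 1) with Odd i, LinearMap.det (f i) := by
  obtain ⟨m, rfl⟩ : ∃ m, k = m + 1 := ⟨k - 1, by lia⟩
  have : Module.Free R (C 0) := hfree 0 (by lia)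
  have : Module.Finite R (C 0) := hfin 0 (by lia)
  have hd : Function.Exact (d 0) (0 : C 0 →ₗ[R] PUnit.{v + 1}) := fun y ↦ by simp [hsurj y]
  have hdet := det_mul_prod_odd_eq_det_mul_prod_even m C (fun i hi ↦ hfree (i + 1) (by lia))
    (fun i hi ↦ hfin (i + 1) (by lia)) d hinj (fun i hi ↦ hexact i (by lia)) f
    (fun i hi ↦ hcomm (i + 1) (by lia)) rfl hd (Function.surjective_to_subsingleton _)
    (hcomm 0 (by lia)) (b := LinearMap.id) rfl
  rw [prod_range_succ_filter_even _ (m + 1), prod_range_succ_filter_odd _ (m + 1), hdet,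
    LinearMap.det_id, one_mul]

/-- For a chain endomorphism `(f_i)` of a bounded exact sequence
`0 → C_k → ⋯ → C_0 → 0` of finitely generated free `ℤ`-modules, the alternating
products of determinants agree: `∏_{i even} det f_i = ∏_{i odd} det f_i`. -/
theorem alternating_det_prod_eq (k : ℕ) (hk : 1 ≤ k)
    (C : ℕ → Type*) [∀ i, AddCommGroup (C i)] [∀ i, Module ℤ (C i)]
    (hfree : ∀ i, i ≤ k → Module.Free ℤ (C i))
    (hfin : ∀ i, i ≤ k → Module.Finite ℤ (C i))
    (d : ∀ i, C (i + 1) →ₗ[ℤ] C i)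
    (hinj : Function.Injective (d (k - 1)))
    (hsurj : Function.Surjective (d 0))
    (hexact : ∀ i, i + 1 < k → Function.Exact (d (i + 1)) (d i))
    (f : ∀ i, C i →ₗ[ℤ] C i)
    (hcomm : ∀ i, i < k → (d i) ∘ₗ (f (i + 1)) = (f i) ∘ₗ (d i)) :
    ∏ i ∈ (Finset.range (k + 1)).filter (fun i => Even i), LinearMap.det (f i) =
      ∏ i ∈ (Finset.range (k + 1)).filter (fun i => Odd i), LinearMap.det (f i) :=
  alternating_det_prod_eq_general k hk C hfree hfin d hinj hsurj hexact f hcomm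
end

section
/- Let n ≥ 1 be an integer not divisible by 3. Then Det(1 + a + b) = −3, i.e. the ℤ-linear endomorphism of ℤ[D_{4n}] given by left multiplication by 1 + a + b has determinant −3. -/
/- `ℤ[D_{4n}]`: `DihedralGroup N` has order `2N`, so we take `N = 2n`.
`a = r 1`, `b = sr 0`.  `Det x` is the determinant of the `ℤ`-linear endomorphism of
`ℤ[D_{4n}]` given by left multiplication by `x`. -/

noncomputable section

abbrev R (N : ℕ) : Type := MonoidAlgebra ℤ (DihedralGroup N)

def gena (N : ℕ) : R N := MonoidAlgebra.of ℤ (DihedralGroup N) (DihedralGroup.r 1)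

def genb (N : ℕ) : R N := MonoidAlgebra.of ℤ (DihedralGroup N) (DihedralGroup.sr 0)

/-- `Det x`: the determinant of left multiplication by `x` on `ℤ[D]`, as a `ℤ`-linear map. -/
def Det (N : ℕ) (x : R N) : ℤ := LinearMap.det (LinearMap.mulLeft ℤ x)

/-!
Write `x = f + b g` with `f, g ∈ ℤ[⟨a⟩]`. In the basis `a^i`, `b a^i`, left multiplication by `x`
is a `2 × 2` block matrix of circulants `F`, `G` and their transposes. These all commute, so its
determinant is `det (F Fᵀ - G Gᵀ)`. For `x = 1 + a + b` we have `F = 1 + P` and `G = 1`, where `P`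
is the cyclic shift, and `F Fᵀ - G Gᵀ = 1 + P + Pᵀ = Pᵀ (1 + P + P²)`.

To evaluate `det (1 + P + P²)` on `ℤ/N` without roots of unity, deform it to `det (t² + t P + P²)`
and multiply by `det (t - P) = t^N - 1`. As `3 ∤ N`, the matrix `P³` is conjugate to `P` by a
permutation, so the product `det (t³ - P³)` is `t^(3N) - 1`. Hence
`det (t² + t P + P²) = 1 + t^N + t^(2N)`, which is `3` at `t = 1`.
-/

open Matrix Polynomial Finset

section Blocks

variable {m K : Type*} [Fintype m] [DecidableEq m] [CommRing K]

theorem det_fromBlocks_mul_det_of_commute (A B : Matrix m m K) {C D : Matrix m m K}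
    (h : Commute C D) :
    (fromBlocks A B C D).det * D.det = (A * D - B * C).det * D.det := by
  have hmul : fromBlocks A B C D * fromBlocks D 0 (-C) 1 = fromBlocks (A * D - B * C) B 0 D := by
    simp [fromBlocks_multiply, h.eq, sub_eq_add_neg]
  simpa using congrArg det hmul

theorem det_fromBlocks_of_commute (A B : Matrix m m K) {C D : Matrix m m K} (h : Commute C D) :
    (fromBlocks A B C D).det = (A * D - B * C).det := by
  let ι : Matrix m m K →+* Matrix m m K[X] := Polynomial.C.mapMatrix
  let ε : Matrix m m K[X] →+* Matrix m m K := (evalRingHom (0 : K)).mapMatrix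
  have hει (M : Matrix m m K) : ε (ι M) = M := by ext; simp [ε, ι]
  -- `charmatrix (-D)` is `D + X`, whose determinant is monic and hence can be cancelled.
  have hcomm : Commute (ι C) (charmatrix (-D)) :=
    .sub_right (scalar_commute _ (.all _) _).symm <| by
      rw [map_neg]; exact (h.map ι).neg_right
  have hreg : IsRightRegular (charmatrix (-D)).det := (charpoly_monic (-D)).isRegular.right
  have hdet := hreg (det_fromBlocks_mul_det_of_commute (ι A) (ι B) hcomm)
  have hεD : ε (charmatrix (-D)) = D := by
    ext i j
    simp [ε, charmatrix_apply, diagonal_apply, apply_ite]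
  have hblocks :
      (evalRingHom (0 : K)).mapMatrix (fromBlocks (ι A) (ι B) (ι C) (charmatrix (-D))) =
        fromBlocks A B C D := by
    simpa [fromBlocks_map, hει, ε] using ⟨hει A, hει B, hει C, hεD⟩
  have heval := congrArg (evalRingHom (0 : K)) hdet
  rwa [RingHom.map_det, RingHom.map_det, hblocks, map_sub, map_mul, map_mul, hει, hει, hει,
    hεD] at heval

end Blocks

section Circulant

variable {G K : Type*} [AddGroup G] [DecidableEq G]

theorem circulant_single_mul_circulant_single [Fintype G] [NonUnitalNonAssocSemiring K]
    (g h : G) (a b : K) :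
    circulant (Pi.single g a) * circulant (Pi.single h b) =
      circulant (Pi.single (g + h) (a * b)) := by
  rw [circulant_mul]
  congr 1
  ext i
  simp [Pi.single_apply, sub_eq_iff_eq_add]

theorem transpose_circulant_single [Zero K] (g : G) (a : K) :
    (circulant (Pi.single g a))ᵀ = circulant (Pi.single (-g) a) := by
  ext i j
  simp [Pi.single_apply, ← neg_eq_iff_eq_neg]

end Circulant

/-- The `N × N` matrix of the cyclic permutation `j ↦ j + 1`, i.e. of multiplication by the
generator `X` of `K[X]/(X^N - 1)`, with rows and columns indexed by `ZMod N`. -/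
def cyclicShift (N : ℕ) (K : Type*) [Zero K] [One K] : Matrix (ZMod N) (ZMod N) K :=
  circulant (Pi.single 1 1)

section CyclicShift

variable (N : ℕ) [NeZero N]

theorem map_cyclicShift {K L : Type*} [Semiring K] [Semiring L] (φ : K →+* L) :
    φ.mapMatrix (cyclicShift N K) = cyclicShift N L := by
  ext i j
  simp [cyclicShift, Pi.single_apply, apply_ite φ]

theorem cyclicShift_pow (K : Type*) [Semiring K] (k : ℕ) :
    cyclicShift N K ^ k = circulant (Pi.single (k : ZMod N) 1) := by
  induction k with
  | zero => simp
  | succ k ih => rw [pow_succ, ih, cyclicShift, circulant_single_mul_circulant_single]; simp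

theorem transpose_cyclicShift_mul_self (K : Type*) [Semiring K] :
    (cyclicShift N K)ᵀ * cyclicShift N K = 1 := by
  rw [cyclicShift, transpose_circulant_single, circulant_single_mul_circulant_single]
  simp

variable (K : Type*) [CommRing K]

theorem linearIndependent_cyclicShift_pow :
    LinearIndependent K fun i : Fin N ↦ cyclicShift N K ^ (i : ℕ) := by
  rw [Fintype.linearIndependent_iff]
  intro c hc i
  have hentry := congrFun (congrFun hc ((i : ℕ) : ZMod N)) 0
  simpa [Matrix.sum_apply, cyclicShift_pow, Pi.single_apply, ZMod.natCast_eq_natCast_iff',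
    Nat.mod_eq_of_lt, Fin.val_inj] using hentry

theorem charpoly_cyclicShift : (cyclicShift N K).charpoly = X ^ N - 1 := by
  nontriviality K
  have hN : N ≠ 0 := NeZero.ne N
  have hli := linearIndependent_cyclicShift_pow N K
  have hcharpoly : minpoly K (cyclicShift N K) = (cyclicShift N K).charpoly :=
    minpoly.eq_of_linearIndependent _ _ (charpoly_monic _) (aeval_self_charpoly _) N
      (by rw [charpoly_degree_eq_dim, ZMod.card]) hli
  have hX_pow : minpoly K (cyclicShift N K) = X ^ N - C 1 :=
    minpoly.eq_of_linearIndependent _ _ (monic_X_pow_sub_C 1 hN)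
      (by simp [cyclicShift_pow]) N (degree_X_pow_sub_C hN.pos 1) hli
  rw [← hcharpoly, hX_pow, map_one]

theorem charpoly_cyclicShift_pow {m : ℕ} (hm : m.Coprime N) :
    (cyclicShift N K ^ m).charpoly = X ^ N - 1 := by
  have hreindex : cyclicShift N K ^ m =
      reindex (ZMod.unitOfCoprime m hm).mulLeft (ZMod.unitOfCoprime m hm).mulLeft
        (cyclicShift N K) := by
    rw [cyclicShift_pow]
    ext i j
    simp [cyclicShift, Pi.single_apply, ← mul_sub, Units.inv_mul_eq_iff_eq_mul]
  rw [hreindex, charpoly_reindex, charpoly_cyclicShift]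

theorem det_cyclicShift : (cyclicShift N K).det = (-1) ^ (N + 1) := by
  rw [det_eq_sign_charpoly_coeff, charpoly_cyclicShift, ZMod.card]
  simp [coeff_X_pow, (NeZero.ne N).symm, pow_succ]

theorem det_geom_sum₂_cyclicShift {m : ℕ} (hm : m.Coprime N) (t : K) :
    (∑ i ∈ range m, scalar (ZMod N) t ^ i * cyclicShift N K ^ (m - 1 - i)).det =
      ∑ i ∈ range m, (t ^ N) ^ i := by
  have hdet (s : K[X]) {A : Matrix (ZMod N) (ZMod N) K[X]} (hA : A.charpoly = X ^ N - 1) :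
      (scalar (ZMod N) s - A).det = s ^ N - 1 := by
    rw [← eval_charpoly, hA]; simp
  have hreg : IsRightRegular (X ^ N - 1 : K[X]) :=
    (monic_X_pow_sub_C (1 : K) (NeZero.ne N)).isRegular.right
  have hX : (∑ i ∈ range m,
      scalar (ZMod N) (X : K[X]) ^ i * cyclicShift N K[X] ^ (m - 1 - i)).det =
        ∑ i ∈ range m, (X ^ N) ^ i := by
    refine hreg ?_
    calc
      _ = (scalar (ZMod N) (X : K[X]) ^ m - cyclicShift N K[X] ^ m).det := by
        rw [← (scalar_commute _ (.all _) _).geom_sum₂_mul, det_mul,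
          hdet _ (charpoly_cyclicShift N K[X])]
      _ = (X ^ N) ^ m - 1 := by
        rw [← map_pow, hdet _ (charpoly_cyclicShift_pow N K[X] hm), pow_right_comm]
      _ = _ := (geom_sum_mul _ _).symm
  have hscalar : (evalRingHom t).mapMatrix (scalar (ZMod N) X) = scalar (ZMod N) t := by
    ext i j
    simp [diagonal_apply, apply_ite (eval t)]
  simpa only [RingHom.map_det, map_sum, map_mul, map_pow, map_cyclicShift, hscalar,
    coe_evalRingHom, eval_X] using congrArg (evalRingHom t) hX

theorem det_geom_sum_cyclicShift {m : ℕ} (hm : m.Coprime N) :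
    (∑ i ∈ range m, cyclicShift N K ^ i).det = m := by
  rw [← sum_range_reflect]
  simpa using det_geom_sum₂_cyclicShift N K hm 1

theorem det_one_add_cyclicShift_add_transpose (h3 : ¬ 3 ∣ N) :
    (1 + cyclicShift N K + (cyclicShift N K)ᵀ).det = (-1) ^ (N + 1) * 3 := by
  have hfactor : 1 + cyclicShift N K + (cyclicShift N K)ᵀ =
      (cyclicShift N K)ᵀ * ∑ i ∈ range 3, cyclicShift N K ^ i := by
    simp only [sum_range_succ, sum_range_zero, zero_add, pow_zero, pow_one, mul_add, mul_one, sq,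
      ← mul_assoc, transpose_cyclicShift_mul_self, one_mul]
    abel
  have hcop : Nat.Coprime 3 N := (Nat.prime_three.coprime_iff_not_dvd).2 h3
  rw [hfactor, det_mul, det_transpose, det_cyclicShift, det_geom_sum_cyclicShift N K hcop]
  norm_num

end CyclicShift

section GroupAlgebra

variable {K : Type*} [CommRing K]

theorem leftMulMatrix_monoidAlgebra_basis_apply {G : Type*} [Group G] [Fintype G] [DecidableEq G]
    (x : MonoidAlgebra K G) (g h : G) :
    Algebra.leftMulMatrix (MonoidAlgebra.basis G K) x g h = x.coeff (g * h⁻¹) := by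
  simp [Algebra.leftMulMatrix_eq_repr_mul, MonoidAlgebra.basis]

theorem norm_dihedralGroup_eq_det_circulant {N : ℕ} [NeZero N]
    (x : MonoidAlgebra K (DihedralGroup N)) :
    Algebra.norm K x =
      (circulant (fun i ↦ x.coeff (.r i)) * (circulant fun i ↦ x.coeff (.r i))ᵀ -
        circulant (fun i ↦ x.coeff (.sr i)) * (circulant fun i ↦ x.coeff (.sr i))ᵀ).det := by
  set F := circulant fun i ↦ x.coeff (.r i)
  set G := circulant fun i ↦ x.coeff (.sr i)
  have hblocks : (Algebra.leftMulMatrix (MonoidAlgebra.basis (DihedralGroup N) K) x).submatrix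
      DihedralGroup.equivSum.symm DihedralGroup.equivSum.symm = fromBlocks F Gᵀ G Fᵀ := by
    ext (i | i) (j | j) <;>
      simp [F, G, leftMulMatrix_monoidAlgebra_basis_apply, sub_eq_add_neg]
  have hGF : Commute G Fᵀ := by
    rw [transpose_circulant]; exact circulant_mul_comm _ _
  have hGG : Gᵀ * G = G * Gᵀ := by
    rw [transpose_circulant]; exact circulant_mul_comm _ _
  rw [Algebra.norm_eq_matrix_det (MonoidAlgebra.basis (DihedralGroup N) K),
    ← det_submatrix_equiv_self DihedralGroup.equivSum.symm, hblocks,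
    det_fromBlocks_of_commute _ _ hGF, hGG]

theorem det_one_add_a_add_b_general {N : ℕ} [NeZero N] (h3 : ¬ 3 ∣ N) :
    Algebra.norm K (1 + MonoidAlgebra.of K (DihedralGroup N) (.r 1) +
      MonoidAlgebra.of K (DihedralGroup N) (.sr 0)) = (-1) ^ (N + 1) * 3 := by
  set x := 1 + MonoidAlgebra.of K (DihedralGroup N) (.r 1) +
    MonoidAlgebra.of K (DihedralGroup N) (.sr 0)
  have hr : (circulant fun i ↦ x.coeff (.r i)) = 1 + cyclicShift N K := by
    rw [← circulant_single_one, cyclicShift, ← circulant_add]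
    congr 1
    ext i
    simp [x, MonoidAlgebra.one_def, DihedralGroup.one_def, -DihedralGroup.r_zero, Pi.single_apply,
      Finsupp.single_apply, eq_comm]
  have hsr : (circulant fun i ↦ x.coeff (.sr i)) = 1 := by
    rw [← circulant_single_one]
    congr 1
    ext i
    simp [x, MonoidAlgebra.one_def, DihedralGroup.one_def, -DihedralGroup.r_zero, Pi.single_apply,
      Finsupp.single_apply, eq_comm]
  have hmul : (1 + cyclicShift N K) * (1 + cyclicShift N K)ᵀ - 1 * 1ᵀ =
      1 + cyclicShift N K + (cyclicShift N K)ᵀ := by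
    have hmul_transpose := mul_eq_one_comm.1 (transpose_cyclicShift_mul_self N K)
    simp only [transpose_add, transpose_one, mul_add, add_mul, mul_one, one_mul, hmul_transpose]
    abel
  rw [norm_dihedralGroup_eq_det_circulant, hr, hsr, hmul,
    det_one_add_cyclicShift_add_transpose N K h3]

end GroupAlgebra

/-- For `n ≥ 1` not divisible by `3`, `Det(1 + a + b) = −3`. -/
theorem det_one_add_a_add_b (n : ℕ) (hn : 1 ≤ n) (h3 : ¬ (3 ∣ n)) :
    Det (2 * n) (1 + gena (2 * n) + genb (2 * n)) = -3 := by
  have : NeZero (2 * n) := ⟨by omega⟩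
  exact (det_one_add_a_add_b_general (K := ℤ) (N := 2 * n) (by omega)).trans (by simp [pow_succ])

end
end

section
/- Let n ≥ 1 be an integer not divisible by 3. Then Det(1 + a − ba) ≠ 0, i.e. the ℤ-linear endomorphism of ℤ[D_{4n}] given by left multiplication by 1 + a − ba has nonzero determinant. -/
/- `ℤ[D_{4n}]`: `DihedralGroup N` has order `2N`, so we take `N = 2n`.
`a = r 1`, `b = sr 0`.  `Det x` is the determinant of the `ℤ`-linear endomorphism of
`ℤ[D_{4n}]` given by left multiplication by `x`. -/

noncomputable section

/-!
Since `aba = b` and `b² = 1`, we have `(1 + a + b)(1 + a - ba) = 1 + a + a²`, so it suffices that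
multiplication by `1 + a + a²` is injective. If `(1 + a + a²) x = 0`, then multiplying by `a - 1`
gives `a³ x = x`; as `aᴺ = 1` with `3 ∤ N`, this forces `a x = x`, hence `3 x = 0`.
-/

section Regularity

variable {S M : Type*}

lemma smul_eq_self_of_pow_smul_eq_self_of_coprime [Monoid S] [MulAction S M] {a : S} {x : M}
    {m n : ℕ} (hm : a ^ m • x = x) (hn : a ^ n • x = x) (hmn : m.Coprime n) : a • x = x := by
  rw [← pow_one a, MulAction.pow_smul_eq_iff_period_dvd, ← hmn.gcd_eq_one]
  exact Nat.dvd_gcd (MulAction.pow_smul_eq_iff_period_dvd.mp hm)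
    (MulAction.pow_smul_eq_iff_period_dvd.mp hn)

lemma geom_sum_smul_of_smul_eq_self [Semiring S] [AddCommMonoid M] [Module S M] {a : S} {x : M}
    (hx : a • x = x) (k : ℕ) : (∑ i ∈ Finset.range k, a ^ i) • x = k • x := by
  have hpow (i : ℕ) : a ^ i • x = x := by
    rw [← smul_iterate_apply, Function.iterate_fixed hx]
  simp [Finset.sum_smul, hpow]

variable [Ring S]

lemma pow_smul_eq_self_of_geom_sum_smul_eq_zero [AddCommGroup M] [Module S M] {a : S} {x : M}
    {k : ℕ} (hx : (∑ i ∈ Finset.range k, a ^ i) • x = 0) : a ^ k • x = x := by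
  rw [← sub_eq_zero]
  calc
    a ^ k • x - x = (a ^ k - 1) • x := by rw [sub_smul, one_smul]
    _ = (a - 1) • (∑ i ∈ Finset.range k, a ^ i) • x := by rw [← mul_geom_sum, mul_smul]
    _ = 0 := by rw [hx, smul_zero]

lemma isSMulRegular_geom_sum_of_coprime [AddCommGroup M] [Module S M] {a : S} {k n : ℕ}
    (hn : a ^ n = 1) (hkn : k.Coprime n) (hk : IsSMulRegular M k) :
    IsSMulRegular M (∑ i ∈ Finset.range k, a ^ i) := by
  refine .of_right_eq_zero_of_smul fun x hx ↦ hk.right_eq_zero_of_smul ?_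
  have hax : a • x = x := smul_eq_self_of_pow_smul_eq_self_of_coprime
    (pow_smul_eq_self_of_geom_sum_smul_eq_zero hx) (by rw [hn, one_smul]) hkn
  rw [← geom_sum_smul_of_smul_eq_self hax, hx]

lemma one_add_add_mul_one_add_sub_mul {a b : S} (hb : b * b = 1) (hab : a * b * a = b) :
    (1 + a + b) * (1 + a - b * a) = 1 + a + a ^ 2 :=
  calc
    (1 + a + b) * (1 + a - b * a) = 1 + a + a ^ 2 + (a - b * b * a) + (b - a * b * a) := by
      noncomm_ring
    _ = 1 + a + a ^ 2 := by rw [hb, hab]; simp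

lemma isSMulRegular_one_add_sub_mul [AddCommGroup M] [Module S M] {a b : S} {n : ℕ}
    (ha : a ^ n = 1) (hb : b * b = 1) (hab : a * b * a = b) (hn : ¬ 3 ∣ n)
    (h3 : IsSMulRegular M (3 : ℕ)) : IsSMulRegular M (1 + a - b * a) := by
  have hgeom : (1 + a + b) * (1 + a - b * a) = ∑ i ∈ Finset.range 3, a ^ i := by
    simp [Finset.sum_range_succ, one_add_add_mul_one_add_sub_mul hb hab]
  refine .of_mul (a := 1 + a + b) (hgeom ▸ ?_)
  exact isSMulRegular_geom_sum_of_coprime ha (Nat.prime_three.coprime_iff_not_dvd.mpr hn) h3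

end Regularity

lemma det_ne_zero_iff_injective {K M : Type*} [CommRing K] [IsDomain K] [AddCommGroup M]
    [Module K M] [Module.Free K M] [Module.Finite K M] {f : M →ₗ[K] M} :
    LinearMap.det f ≠ 0 ↔ Function.Injective f :=
  LinearMap.det_eq_zero_iff_ker_ne_bot.not_left.trans LinearMap.ker_eq_bot

lemma gena_pow_self (N : ℕ) : gena N ^ N = 1 := by
  rw [gena, ← map_pow, DihedralGroup.r_one_pow_n, map_one]

lemma genb_mul_self (N : ℕ) : genb N * genb N = 1 := by
  rw [genb, ← map_mul, DihedralGroup.sr_mul_self, map_one]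

lemma gena_mul_genb_mul_gena (N : ℕ) : gena N * genb N * gena N = genb N := by
  simp [gena, genb, ← map_mul, -MonoidAlgebra.of_apply]

theorem det_one_add_a_sub_ba_ne_zero_general {K A : Type*} [CommRing K] [IsDomain K] [Ring A]
    [Algebra K A] [Module.Free K A] [Module.Finite K A] {a b : A} {N : ℕ} (ha : a ^ N = 1)
    (hb : b * b = 1) (hab : a * b * a = b) (hN : ¬ 3 ∣ N) (h3 : (3 : K) ≠ 0) :
    LinearMap.det (LinearMap.mulLeft K (1 + a - b * a)) ≠ 0 := by
  have h3A : IsSMulRegular A (3 : ℕ) := by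
    refine .of_right_eq_zero_of_smul fun x hx ↦ ?_
    rw [← Nat.cast_smul_eq_nsmul K] at hx
    exact (smul_eq_zero.mp hx).resolve_left h3
  exact det_ne_zero_iff_injective.mpr (isSMulRegular_one_add_sub_mul ha hb hab hN h3A)

/-- For `n ≥ 1` not divisible by `3`, `Det(1 + a − ba) ≠ 0`. -/
theorem det_one_add_a_sub_ba_ne_zero (n : ℕ) (hn : 1 ≤ n) (h3 : ¬ (3 ∣ n)) :
    Det (2 * n) (1 + gena (2 * n) - genb (2 * n) * gena (2 * n)) ≠ 0 := by
  have : NeZero (2 * n) := ⟨by omega⟩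
  exact det_one_add_a_sub_ba_ne_zero_general (gena_pow_self _) (genb_mul_self _)
    (gena_mul_genb_mul_gena _) (by omega) (by norm_num)

end
end

section
/- Let n ≥ 1 be an integer not divisible by 3, and let J be the kernel of ∂₂. The map α₂ : ℤ[D_{4n}]³ → ℤ[D_{4n}]³, (x,y,z) ↦ ((1+a−ba)x, y, z), maps J into J, and its restriction θ : J → J is a bijection; moreover, as a ℤ-linear automorphism of the finitely generated free ℤ-module J, θ has determinant −1. -/
/- `ℤ[D_{4n}]`: `DihedralGroup N` has order `2N`, so we take `N = 2n`.
`a = r 1`, `b = sr 0`, `Σ = ∑_{i=0}^{2n-1} aⁱ`.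
`∂₂ : ℤ[D]³ → ℤ[D]², (x,y,z) ↦ (Σx + (1+ba)z, (1+b)y + (a−1)z)` (left multiplication by
fixed elements, viewed here as a `ℤ`-linear map so that `J = ker ∂₂` is a `ℤ`-submodule and
determinants of `ℤ`-linear endomorphisms of `J` make sense), and
`α₂ : (x,y,z) ↦ ((1+a−ba)x, y, z)`. -/

noncomputable section

def sig (N : ℕ) : R N := ∑ i ∈ Finset.range N, gena N ^ i

/-- `∂₂ : ℤ[D]³ → ℤ[D]²`, `(x,y,z) ↦ (Σx + (1+ba)z, (1+b)y + (a−1)z)`. -/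
def bdry2 (N : ℕ) : (R N × R N × R N) →ₗ[ℤ] (R N × R N) :=
  LinearMap.prod
    ((LinearMap.mulLeft ℤ (sig N)).comp (LinearMap.fst ℤ (R N) (R N × R N)) +
      (LinearMap.mulLeft ℤ (1 + genb N * gena N)).comp
        ((LinearMap.snd ℤ (R N) (R N)).comp (LinearMap.snd ℤ (R N) (R N × R N))))
    ((LinearMap.mulLeft ℤ (1 + genb N)).comp
        ((LinearMap.fst ℤ (R N) (R N)).comp (LinearMap.snd ℤ (R N) (R N × R N))) +
      (LinearMap.mulLeft ℤ (gena N - 1)).comp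
        ((LinearMap.snd ℤ (R N) (R N)).comp (LinearMap.snd ℤ (R N) (R N × R N))))

/-- `J = ker ∂₂`. -/
def J (N : ℕ) : Submodule ℤ (R N × R N × R N) := LinearMap.ker (bdry2 N)

/-- `α₂ : ℤ[D]³ → ℤ[D]³`, `(x,y,z) ↦ ((1+a−ba)x, y, z)`. -/
def alpha2 (N : ℕ) : (R N × R N × R N) →ₗ[ℤ] (R N × R N × R N) :=
  (LinearMap.mulLeft ℤ (1 + gena N - genb N * gena N)).prodMap LinearMap.id

/-! On the first coordinate `α₂ - 1` is multiplication by `a - ba = (1 - b)a`, whose image lies in the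
span of the elements `(b - 1)aⁱ`. Hence `θ - 1` factors as `J → I → J`, where `I` is the module of
functions on `ℤ/N` with sum zero, and the Weinstein–Aronszajn identity turns `det θ` into
`det (1 + S + S⁻¹)` on `I`, where `S` is the cyclic shift.

There `(1 + S + S²)(S - 1) = S³ - 1`. As `3` is a unit modulo `N`, multiplication by `3` conjugates `S`
to `S³`, so `S - 1` and `S³ - 1` have the same determinant; it is nonzero because a shift-invariant
function with sum zero vanishes. Therefore `det (1 + S + S²) = 1`, and
`det (1 + S + S⁻¹) = det S⁻¹ = (-1) ^ (N + 1)` is the sign of an `N`-cycle. -/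

open DihedralGroup Equiv LinearMap

section Determinant

variable {A M P : Type*} [CommRing A] [AddCommGroup M] [Module A M]

lemma det_one_add_comp_comm [Module.Free A M] [Module.Finite A M] [AddCommGroup P] [Module A P]
    [Module.Free A P] [Module.Finite A P] (f : P →ₗ[A] M) (g : M →ₗ[A] P) :
    LinearMap.det (1 + f ∘ₗ g) = LinearMap.det (1 + g ∘ₗ f) := by
  classical
  have bM := Module.Free.chooseBasis A M
  have bP := Module.Free.chooseBasis A P
  rw [← det_toMatrix bM, ← det_toMatrix bP, map_add, map_add, toMatrix_one, toMatrix_one,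
    toMatrix_comp bM bP bM, toMatrix_comp bP bM bP, Matrix.det_one_add_mul_comm]

lemma det_representation_conj_sub_one {G : Type*} [Group G] (ρ : Representation A G M) (g h : G) :
    LinearMap.det (ρ (g * h * g⁻¹) - 1) = LinearMap.det (ρ h - 1) := by
  have hg : ρ g * ρ g⁻¹ = 1 := by rw [← map_mul, mul_inv_cancel, map_one]
  have hconj : ρ (g * h * g⁻¹) - 1 = ρ g * (ρ h - 1) * ρ g⁻¹ := by
    rw [mul_sub, sub_mul, mul_one, hg, map_mul, map_mul]
  rw [hconj, map_mul, map_mul, mul_right_comm, ← map_mul, hg, map_one, one_mul]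

lemma det_funLeft_perm {ι : Type*} [Fintype ι] [DecidableEq ι] (e : Perm ι) :
    LinearMap.det (funLeft A A e) = (Perm.sign e : ℤ) := by
  have htoLin : funLeft A A e = Matrix.toLin' (e.permMatrix A) := by
    refine LinearMap.ext fun v ↦ ?_
    ext1 i
    simp [funLeft_apply, Matrix.permMatrix_mulVec]
  rw [htoLin, det_toLin', Matrix.det_permutation]

end Determinant

section StandardRepresentation

variable (A ι : Type*) [CommRing A] [Fintype ι]

/-- The `ι`-indexed families in `A` with sum zero: the underlying module of the standard
representation of the symmetric group on `ι`. -/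
def sumZero : Submodule A (ι → A) := LinearMap.ker (∑ i, LinearMap.proj i)

variable {A ι}

lemma mem_sumZero {p : ι → A} : p ∈ sumZero A ι ↔ ∑ i, p i = 0 := by
  simp [sumZero]

lemma funLeft_perm_mem_sumZero (e : Perm ι) :
    ∀ p ∈ sumZero A ι, funLeft A A e p ∈ sumZero A ι := fun p hp ↦ by
  rw [mem_sumZero] at hp ⊢
  exact (Equiv.sum_comp e p).trans hp

instance [Nonempty ι] : Module.Free A ((ι → A) ⧸ sumZero A ι) := by
  classical
  obtain ⟨i⟩ := ‹Nonempty ι›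
  have hsurj : Function.Surjective (∑ j, LinearMap.proj j : (ι → A) →ₗ[A] A) :=
    fun c ↦ ⟨Pi.single i c, by simp⟩
  exact Module.Free.of_equiv (quotKerEquivOfSurjective _ hsurj).symm

variable (A ι)

/-- The standard representation of the symmetric group on `ι`, acting on families with sum zero by
`(e • p) i = p (e⁻¹ i)`. -/
def standardRep : Representation A (Perm ι) (sumZero A ι) where
  toFun e := (funLeft A A e.symm).restrict (funLeft_perm_mem_sumZero e.symm)
  map_one' := rfl
  map_mul' _ _ := rfl

variable {A ι}

lemma standardRep_apply (e : Perm ι) (p : sumZero A ι) (i : ι) :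
    (standardRep A ι e p).1 i = p.1 (e.symm i) := rfl

variable [IsDomain A] [IsPrincipalIdealRing A]

lemma det_standardRep [DecidableEq ι] (e : Perm ι) :
    LinearMap.det (standardRep A ι e) = (Perm.sign e : ℤ) := by
  rcases isEmpty_or_nonempty ι with _ | _
  · simp [Subsingleton.elim e 1]
  have hmem := funLeft_perm_mem_sumZero (A := A) e.symm
  have hquot : (sumZero A ι).mapQ (sumZero A ι) (funLeft A A e.symm) hmem = LinearMap.id := by
    refine Submodule.linearMap_qext _ (LinearMap.ext fun p ↦ ?_)
    refine (Submodule.Quotient.eq _).2 (mem_sumZero.2 ?_)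
    simp [funLeft_apply, Equiv.sum_comp e.symm p]
  have hdet := det_eq_det_mul_det (sumZero A ι) (funLeft A A e.symm) hmem
  rw [hquot, det_id, mul_one, det_funLeft_perm, Perm.sign_symm] at hdet
  exact hdet.symm

lemma det_standardRep_sub_one_ne_zero [CharZero A] {e : Perm ι} (he : e.IsCycleOn Set.univ) :
    LinearMap.det (standardRep A ι e - 1) ≠ 0 := by
  rw [Ne, det_eq_zero_iff_ker_ne_bot, not_not, ker_eq_bot']
  intro p hp
  have hinv : standardRep A ι e p = p := sub_eq_zero.1 hp
  have hfix (i : ι) : p.1 (e.symm i) = p.1 i := by rw [← standardRep_apply, hinv]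
  have hpow (k : ℕ) (i : ι) : p.1 ((e ^ k) i) = p.1 i := by
    induction k with
    | zero => rfl
    | succ k ih => rw [pow_succ', Perm.mul_apply, ← hfix, symm_apply_apply, ih]
  have hconst (i j : ι) : p.1 j = p.1 i := by
    obtain ⟨k, rfl⟩ := (he.2 (Set.mem_univ i) (Set.mem_univ j)).exists_nat_pow_eq
    exact hpow k i
  ext i
  have : Nonempty ι := ⟨i⟩
  simpa [hconst i] using mem_sumZero.1 p.2

end StandardRepresentation

section CyclicShift

lemma isCycleOn_addRight_one (N : ℕ) : (Equiv.addRight (1 : ZMod N)).IsCycleOn Set.univ := by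
  refine ⟨Set.bijOn_univ.2 (Equiv.bijective _), fun i _ j _ ↦ ⟨(j - i).cast, ?_⟩⟩
  simp

lemma sign_addRight_one (N : ℕ) [NeZero N] :
    Perm.sign (Equiv.addRight (1 : ZMod N)) = (-1) ^ (N + 1) := by
  have hrot : Equiv.addRight (1 : ZMod N) = (ZMod.finEquiv N).toEquiv.permCongr (finRotate N) := by
    ext1 i
    simp [permCongr_apply]
  obtain ⟨m, rfl⟩ := Nat.exists_eq_succ_of_ne_zero (NeZero.ne N)
  rw [hrot, Perm.sign_permCongr, sign_finRotate]
  simp [pow_succ]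

lemma det_standardRep_addRight_unit_mul_sub_one {A K : Type*} [CommRing A] [Ring K] [Fintype K]
    (u : Kˣ) (c : K) :
    LinearMap.det (standardRep A K (Equiv.addRight (u * c)) - 1) =
      LinearMap.det (standardRep A K (Equiv.addRight c) - 1) := by
  have hconj : Equiv.addRight (u * c) = u.mulLeft * Equiv.addRight c * u.mulLeft⁻¹ := by
    ext1 i
    simp [mul_add]
  rw [hconj, det_representation_conj_sub_one]

variable {A : Type*} [CommRing A] [IsDomain A] [IsPrincipalIdealRing A] [CharZero A]
  {N : ℕ} [NeZero N]

lemma det_geom_sum_standardRep_addRight_one {k : ℕ} (hk : k.Coprime N) :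
    LinearMap.det (∑ i ∈ Finset.range k, standardRep A (ZMod N) (Equiv.addRight 1) ^ i) = 1 := by
  have hpow : standardRep A (ZMod N) (Equiv.addRight 1) ^ k =
      standardRep A (ZMod N) (Equiv.addRight (ZMod.unitOfCoprime k hk * 1)) := by
    rw [← map_pow, Equiv.nsmul_addRight, nsmul_one, ZMod.coe_unitOfCoprime, mul_one]
  have hdet := congrArg LinearMap.det (geom_sum_mul (standardRep A (ZMod N) (Equiv.addRight 1)) k)
  rw [map_mul, hpow, det_standardRep_addRight_unit_mul_sub_one] at hdet
  exact (mul_eq_right₀ (det_standardRep_sub_one_ne_zero (isCycleOn_addRight_one N))).1 hdet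

lemma one_add_add_eq_mul_geom_sum_three {B : Type*} [Ring B] {x y : B} (hyx : y * x = 1) :
    1 + (x + y) = y * ∑ i ∈ Finset.range 3, x ^ i := by
  simp only [Finset.sum_range_succ, Finset.sum_range_zero, zero_add, pow_zero, pow_one, pow_two,
    mul_add, mul_one, ← mul_assoc, hyx, one_mul]
  abel

lemma det_one_add_standardRep_addRight_one_add_inv (h3 : ¬ 3 ∣ N) :
    LinearMap.det (1 + (standardRep A (ZMod N) (Equiv.addRight 1) +
      standardRep A (ZMod N) (Equiv.addRight 1)⁻¹)) = (-1) ^ (N + 1) := by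
  have hinv : standardRep A (ZMod N) (Equiv.addRight 1)⁻¹ *
      standardRep A (ZMod N) (Equiv.addRight 1) = 1 := by
    rw [← map_mul, inv_mul_cancel, map_one]
  refine (congrArg LinearMap.det (one_add_add_eq_mul_geom_sum_three hinv)).trans ?_
  rw [map_mul, det_geom_sum_standardRep_addRight_one (Nat.prime_three.coprime_iff_not_dvd.2 h3),
    mul_one, det_standardRep, Perm.sign_inv, sign_addRight_one]
  simp

end CyclicShift

section GroupRing

lemma coeff_of_mul {A G : Type*} [Semiring A] [Group G] (g : G) (x : MonoidAlgebra A G) (h : G) :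
    (MonoidAlgebra.of A G g * x).coeff h = x.coeff (g⁻¹ * h) := by
  simp [MonoidAlgebra.of_apply]

variable {N : ℕ}

lemma coeff_gena_mul_r (x : R N) (i : ZMod N) :
    (gena N * x).coeff (r i) = x.coeff (r (i - 1)) := by
  rw [gena, coeff_of_mul, inv_r, r_mul_r, neg_add_eq_sub]

lemma coeff_gena_mul_sr (x : R N) (i : ZMod N) :
    (gena N * x).coeff (sr i) = x.coeff (sr (i + 1)) := by
  rw [gena, coeff_of_mul, inv_r, r_mul_sr, sub_neg_eq_add]

lemma coeff_genb_mul_r (x : R N) (i : ZMod N) :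
    (genb N * x).coeff (r i) = x.coeff (sr i) := by
  rw [genb, coeff_of_mul, inv_sr, sr_mul_r, zero_add]

lemma coeff_genb_mul_sr (x : R N) (i : ZMod N) :
    (genb N * x).coeff (sr i) = x.coeff (r i) := by
  rw [genb, coeff_of_mul, inv_sr, sr_mul_sr, sub_zero]

variable [NeZero N]

lemma sig_eq_sum_of_r : sig N = ∑ k : ZMod N, MonoidAlgebra.of ℤ (DihedralGroup N) (r k) := by
  have hpow (k : ℕ) : gena N ^ k = MonoidAlgebra.of ℤ (DihedralGroup N) (r k) := by
    rw [gena, ← map_pow, r_one_pow]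
  simp only [sig, hpow, Finset.sum_range]
  obtain ⟨m, rfl⟩ := Nat.exists_eq_succ_of_ne_zero (NeZero.ne N)
  exact Fintype.sum_congr _ _ fun k ↦ congrArg _ (congrArg r (ZMod.natCast_zmod_val (n := m + 1) k))

lemma coeff_sig_mul_r (x : R N) (i : ZMod N) :
    (sig N * x).coeff (r i) = ∑ k, x.coeff (r k) := by
  simp only [sig_eq_sum_of_r, Finset.sum_mul, MonoidAlgebra.coeff_sum, Finsupp.finsetSum_apply,
    coeff_of_mul, inv_r, r_mul_r, neg_add_eq_sub]
  exact Equiv.sum_comp (Equiv.subLeft i) fun k ↦ x.coeff (r k)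

lemma coeff_sig_mul_sr (x : R N) (i : ZMod N) :
    (sig N * x).coeff (sr i) = ∑ k, x.coeff (sr k) := by
  simp only [sig_eq_sum_of_r, Finset.sum_mul, MonoidAlgebra.coeff_sum, Finsupp.finsetSum_apply,
    coeff_of_mul, inv_r, r_mul_sr, sub_neg_eq_add]
  exact Equiv.sum_comp (Equiv.addLeft i) fun k ↦ x.coeff (sr k)

end GroupRing

section Factorization

variable {N : ℕ}

lemma mem_J {v : R N × R N × R N} : v ∈ J N ↔
    sig N * v.1 + (1 + genb N * gena N) * v.2.2 = 0 ∧
      (1 + genb N) * v.2.1 + (gena N - 1) * v.2.2 = 0 := by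
  simp [J, bdry2]

variable (N)

/-- The coordinates of `(a - ba)x` with respect to the family `(b - 1)aⁱ`. -/
def skewCoeff : R N →ₗ[ℤ] (ZMod N → ℤ) where
  toFun x i := x.coeff (sr (i + 1)) - x.coeff (r (i - 1))
  map_add' x y := by
    ext i
    simp only [MonoidAlgebra.coeff_add, Finsupp.add_apply, Pi.add_apply]
    ring
  map_smul' c x := by
    ext i
    simp only [MonoidAlgebra.coeff_smul_apply, Pi.smul_apply, smul_sub, RingHom.id_apply]

variable {N}

lemma skewCoeff_apply (x : R N) (i : ZMod N) :
    skewCoeff N x i = x.coeff (sr (i + 1)) - x.coeff (r (i - 1)) := rfl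

variable (N) [NeZero N]

/-- The map `p ↦ ∑ᵢ pᵢ (b - 1)aⁱ`. -/
def skewSum : (ZMod N → ℤ) →ₗ[ℤ] R N :=
  Fintype.linearCombination ℤ fun i ↦
    MonoidAlgebra.of ℤ (DihedralGroup N) (sr i) - MonoidAlgebra.of ℤ (DihedralGroup N) (r i)

variable {N}

lemma coeff_skewSum_r (p : ZMod N → ℤ) (i : ZMod N) : (skewSum N p).coeff (r i) = -p i := by
  simp [skewSum, Fintype.linearCombination_apply, MonoidAlgebra.of_apply, Finsupp.single_apply,
    -zsmul_eq_mul]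

lemma coeff_skewSum_sr (p : ZMod N → ℤ) (i : ZMod N) : (skewSum N p).coeff (sr i) = p i := by
  simp [skewSum, Fintype.linearCombination_apply, MonoidAlgebra.of_apply, Finsupp.single_apply,
    -zsmul_eq_mul]

lemma one_add_gena_sub_genb_mul_gena_mul (x : R N) :
    (1 + gena N - genb N * gena N) * x = x + skewSum N (skewCoeff N x) := by
  ext g
  cases g with
  | r i =>
    simp only [sub_mul, add_mul, one_mul, mul_assoc, MonoidAlgebra.coeff_add,
      MonoidAlgebra.coeff_sub, Finsupp.add_apply, Finsupp.sub_apply, coeff_skewSum_r,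
      coeff_genb_mul_r, coeff_gena_mul_r, coeff_gena_mul_sr, skewCoeff_apply]
    ring
  | sr i =>
    simp only [sub_mul, add_mul, one_mul, mul_assoc, MonoidAlgebra.coeff_add,
      MonoidAlgebra.coeff_sub, Finsupp.add_apply, Finsupp.sub_apply, coeff_skewSum_sr,
      coeff_genb_mul_sr, coeff_gena_mul_r, coeff_gena_mul_sr, skewCoeff_apply]
    ring

lemma alpha2_apply (v : R N × R N × R N) :
    alpha2 N v = v + (skewSum N (skewCoeff N v.1), 0, 0) := by
  ext1
  · exact one_add_gena_sub_genb_mul_gena_mul v.1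
  · simp [alpha2]

lemma skewSum_mem_J {p : ZMod N → ℤ} (hp : p ∈ sumZero ℤ (ZMod N)) :
    (skewSum N p, 0, 0) ∈ J N := by
  rw [mem_sumZero] at hp
  have hsig : sig N * skewSum N p = 0 := by
    ext g
    cases g with
    | r i => simp [coeff_sig_mul_r, coeff_skewSum_r, hp]
    | sr i => simp [coeff_sig_mul_sr, coeff_skewSum_sr, hp]
  simp [mem_J, hsig]

lemma skewCoeff_mem_sumZero {v : R N × R N × R N} (hv : v ∈ J N) :
    skewCoeff N v.1 ∈ sumZero ℤ (ZMod N) := by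
  have hr := congrArg (fun w : R N ↦ w.coeff (r 0)) (mem_J.1 hv).1
  have hsr := congrArg (fun w : R N ↦ w.coeff (sr 1)) (mem_J.1 hv).1
  simp only [add_mul, one_mul, mul_assoc, MonoidAlgebra.coeff_add, Finsupp.add_apply,
    coeff_sig_mul_r, coeff_sig_mul_sr, coeff_genb_mul_r, coeff_genb_mul_sr, coeff_gena_mul_r,
    coeff_gena_mul_sr, MonoidAlgebra.coeff_zero, Finsupp.coe_zero, Pi.zero_apply, zero_add,
    sub_self] at hr hsr
  have shift_sr : ∑ i, v.1.coeff (sr (i + 1)) = ∑ i, v.1.coeff (sr i) :=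
    Equiv.sum_comp (Equiv.addRight (1 : ZMod N)) fun i ↦ v.1.coeff (sr i)
  have shift_r : ∑ i, v.1.coeff (r (i - 1)) = ∑ i, v.1.coeff (r i) :=
    Equiv.sum_comp (Equiv.subRight (1 : ZMod N)) fun i ↦ v.1.coeff (r i)
  simp only [mem_sumZero, skewCoeff_apply, Finset.sum_sub_distrib, shift_sr, shift_r]
  linarith

lemma alpha2_mem_J {v : R N × R N × R N} (hv : v ∈ J N) : alpha2 N v ∈ J N := by
  rw [alpha2_apply]
  exact add_mem hv (skewSum_mem_J (skewCoeff_mem_sumZero hv))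

variable (N)

/-- `skewSum` as a map from the sum-zero families to the first coordinate of `J`. -/
def sumZeroToJ : sumZero ℤ (ZMod N) →ₗ[ℤ] J N :=
  (inl ℤ (R N) (R N × R N) ∘ₗ skewSum N).restrict fun _ ↦ skewSum_mem_J

/-- `skewCoeff` of the first coordinate, as a map from `J` to the sum-zero families. -/
def jToSumZero : J N →ₗ[ℤ] sumZero ℤ (ZMod N) :=
  (skewCoeff N ∘ₗ LinearMap.fst ℤ (R N) (R N × R N)).restrict fun _ ↦ skewCoeff_mem_sumZero

lemma restrict_alpha2_eq (h : ∀ v ∈ J N, alpha2 N v ∈ J N) :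
    (alpha2 N).restrict h = 1 + sumZeroToJ N ∘ₗ jToSumZero N :=
  LinearMap.ext fun v ↦ Subtype.ext (alpha2_apply v.1)

lemma jToSumZero_comp_sumZeroToJ : jToSumZero N ∘ₗ sumZeroToJ N =
    standardRep ℤ (ZMod N) (Equiv.addRight 1) + standardRep ℤ (ZMod N) (Equiv.addRight 1)⁻¹ := by
  ext p i
  change skewCoeff N (skewSum N p.1) i = (standardRep ℤ (ZMod N) (Equiv.addRight 1) p).1 i +
    (standardRep ℤ (ZMod N) (Equiv.addRight 1)⁻¹ p).1 i
  rw [skewCoeff_apply, coeff_skewSum_r, coeff_skewSum_sr, standardRep_apply, standardRep_apply]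
  simp [sub_eq_add_neg, add_comm]

end Factorization

theorem theta_bijective_det_neg_one_general (N : ℕ) (h3 : ¬ (3 ∣ N)) :
    ∃ h : ∀ x ∈ J N, alpha2 N x ∈ J N,
      Function.Bijective ((alpha2 N).restrict h) ∧
      LinearMap.det ((alpha2 N).restrict h) = (-1) ^ (N + 1) := by
  have : NeZero N := ⟨fun hN ↦ h3 (hN ▸ dvd_zero 3)⟩
  have hmem : ∀ x ∈ J N, alpha2 N x ∈ J N := fun _ ↦ alpha2_mem_J
  have hdet : LinearMap.det ((alpha2 N).restrict hmem) = (-1) ^ (N + 1) := by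
    rw [restrict_alpha2_eq, det_one_add_comp_comm, jToSumZero_comp_sumZeroToJ,
      det_one_add_standardRep_addRight_one_add_inv h3]
  refine ⟨hmem, ?_, hdet⟩
  rw [← Module.End.isUnit_iff, isUnit_iff_isUnit_det, hdet]
  exact isUnit_one.neg.pow _

/-- For `n ≥ 1` not divisible by `3`: `α₂` maps `J` into `J`, its restriction
`θ : J → J` is a bijection, and as a `ℤ`-linear automorphism of `J` it has
determinant `−1`. -/
theorem theta_bijective_det_neg_one (n : ℕ) (hn : 1 ≤ n) (h3 : ¬ (3 ∣ n)) :
    ∃ h : ∀ x ∈ J (2 * n), alpha2 (2 * n) x ∈ J (2 * n),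
      Function.Bijective ((alpha2 (2 * n)).restrict h) ∧
      LinearMap.det ((alpha2 (2 * n)).restrict h) = -1 := by
  obtain ⟨hmem, hbij, hdet⟩ := theta_bijective_det_neg_one_general (2 * n) (by omega)
  exact ⟨hmem, hbij, by rw [hdet, (odd_two_mul_add_one n).neg_one_pow]⟩

end
end

section
/- Let n ≥ 1 and let 𝔽₂ denote the field of two elements regarded as a trivial module over the dihedral group D_{4n} of order 4n. Then the group cohomology of D_{4n} with coefficients in 𝔽₂ satisfies: H⁰(D_{4n}, 𝔽₂) has 𝔽₂-dimension 1, H¹(D_{4n}, 𝔽₂) has 𝔽₂-dimension 2, and H²(D_{4n}, 𝔽₂) has 𝔽₂-dimension 3. -/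
/-!
For a trivial module `A`, a 2-cocycle `f` on `G` is a coboundary exactly when the extension of `G`
by `A` with factor set `f` splits. If `g ^ m = 1`, then the `m`-th power of the lift `(a, g)` in
this extension is trivial exactly when `m • a + ∑ j < m, f (g ^ j, g) = 0`.
For `D_N = ⟨r, s | r ^ N = s ^ 2 = (s r) ^ 2 = 1⟩` with `N` even and `A` of characteristic two, the
term `m • a` disappears from all three relations, so `f` is a coboundary iff its three sums, for
`s`, `s r` and `r`, vanish. This embeds `H²` into `A³`. The embedding is onto: cup products of
characters realize the first two coordinates, and the third is realized by the reduction mod `2`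
of the extension `ℤ → D_∞ → D_N`, that is, by the carries in addition modulo `N`.
-/

universe u

section Extension

open groupCohomology

variable {k G : Type u} [CommRing k] [Group G] {A : Rep k G}

/-- The extension of `G` by `A` with factor set `f`: pairs `(a, g)` multiplied by
`(a, g) * (b, h) = (a + g • b + f (g, h), g * h)`. As `f` need not be normalized, the identity is
`(-f (1, 1), 1)`. -/
@[ext]
structure CocycleExtension (f : cocycles₂ A) where
  fiber : A
  base : G

namespace CocycleExtension

variable {f : cocycles₂ A}

instance : Mul (CocycleExtension f) where
  mul x y := ⟨x.fiber + A.ρ x.base y.fiber + f (x.base, y.base), x.base * y.base⟩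

instance : One (CocycleExtension f) where
  one := ⟨-f (1, 1), 1⟩

instance : Inv (CocycleExtension f) where
  inv x := ⟨-A.ρ x.base⁻¹ x.fiber - f (x.base⁻¹, x.base) - f (1, 1), x.base⁻¹⟩

lemma mul_fiber (x y : CocycleExtension f) :
    (x * y).fiber = x.fiber + A.ρ x.base y.fiber + f (x.base, y.base) := rfl

lemma mul_base (x y : CocycleExtension f) : (x * y).base = x.base * y.base := rfl

lemma one_fiber : (1 : CocycleExtension f).fiber = -f (1, 1) := rfl

lemma one_base : (1 : CocycleExtension f).base = 1 := rfl

lemma inv_fiber (x : CocycleExtension f) :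
    x⁻¹.fiber = -A.ρ x.base⁻¹ x.fiber - f (x.base⁻¹, x.base) - f (1, 1) := rfl

lemma inv_base (x : CocycleExtension f) : x⁻¹.base = x.base⁻¹ := rfl

instance : Group (CocycleExtension f) :=
  Group.ofLeftAxioms
    (fun x y z => by
      ext
      · have hf := (mem_cocycles₂_iff f).1 f.2 x.base y.base z.base
        simp only [mul_fiber, mul_base, map_add, map_mul, Module.End.mul_apply]
        linear_combination (norm := module) hf
      · exact mul_assoc ..)
    (fun x => by
      ext
      · simp only [mul_fiber, one_fiber, one_base, map_one, Module.End.one_apply,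
          cocycles₂_map_one_fst]
        abel
      · exact one_mul _)
    (fun x => by
      ext
      · simp only [mul_fiber, one_fiber, inv_fiber, inv_base]
        abel
      · exact inv_mul_cancel _)

variable (f) in
/-- The projection of the extension onto `G`. -/
def proj : CocycleExtension f →* G where
  toFun := base
  map_one' := one_base
  map_mul' := mul_base

end CocycleExtension

open CocycleExtension

theorem mem_coboundaries₂_iff_exists_section (f : cocycles₂ A) :
    ⇑f ∈ coboundaries₂ A ↔ ∃ s : G →* CocycleExtension f, (proj f).comp s = .id G := by
  constructor
  · rintro ⟨x, hx⟩
    have hf (g h : G) : A.ρ g (x h) - x (g * h) + x g = f (g, h) := congrFun hx (g, h)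
    refine ⟨MonoidHom.mk' (fun g => ⟨-x g, g⟩) fun g h => ?_, rfl⟩
    ext
    · simp only [mul_fiber, ← hf, map_neg]
      abel
    · rfl
  · rintro ⟨s, hs⟩
    have hbase (g : G) : (s g).base = g := DFunLike.congr_fun hs g
    refine ⟨fun g => -(s g).fiber, funext fun ⟨g, h⟩ => ?_⟩
    have hmul := congrArg fiber (map_mul s g h)
    rw [mul_fiber, hbase, hbase] at hmul
    change A.ρ g (-(s h).fiber) - -(s (g * h)).fiber + -(s g).fiber = f (g, h)
    rw [hmul, map_neg]
    abel

/-- For `A` trivial and `g ^ m = 1`, the obstruction, modulo `m • A`, to lifting `g` to an element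
of `CocycleExtension f` whose `m`-th power is trivial. It represents the restriction of the class
of `f` along `ℤ/m → G` under `H²(ℤ/m, A) ≅ A / m • A`. -/
def powerObstruction (A : Rep k G) (g : G) (m : ℕ) : cocycles₂ A →ₗ[k] A where
  toFun f := ∑ j ∈ Finset.range m, f (g ^ j, g)
  map_add' _ _ := Finset.sum_add_distrib
  map_smul' c f := (Finset.smul_sum (r := c) (f := fun j => f (g ^ j, g))).symm

lemma powerObstruction_apply (g : G) (m : ℕ) (f : cocycles₂ A) :
    powerObstruction A g m f = ∑ j ∈ Finset.range m, f (g ^ j, g) := rfl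

lemma powerObstruction_two (g : G) (f : cocycles₂ A) :
    powerObstruction A g 2 f = f (1, g) + f (g, g) := by
  simp [powerObstruction_apply, Finset.sum_range_succ]

variable [A.IsTrivial]

lemma CocycleExtension.pow_eq {f : cocycles₂ A} (x : CocycleExtension f) (m : ℕ) :
    x ^ m = ⟨m • x.fiber + powerObstruction A x.base m f - f (1, 1), x.base ^ m⟩ := by
  induction m with
  | zero => ext <;> simp [one_fiber, one_base, powerObstruction_apply]
  | succ m ih =>
    rw [pow_succ, ih]
    ext
    · simp only [mul_fiber, powerObstruction_apply, Finset.sum_range_succ, succ_nsmul,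
        Representation.isTrivial_apply]
      abel
    · exact (pow_succ ..).symm

protected lemma CocycleExtension.pow_eq_one_iff {f : cocycles₂ A} (x : CocycleExtension f) (m : ℕ) :
    x ^ m = 1 ↔ m • x.fiber + powerObstruction A x.base m f = 0 ∧ x.base ^ m = 1 := by
  rw [pow_eq, CocycleExtension.ext_iff, one_fiber, one_base, sub_eq_neg_self]

lemma exists_nsmul_add_powerObstruction_eq_zero {f : cocycles₂ A} (hf : ⇑f ∈ coboundaries₂ A)
    {g : G} {m : ℕ} (hg : g ^ m = 1) : ∃ a : A, m • a + powerObstruction A g m f = 0 := by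
  obtain ⟨s, hs⟩ := (mem_coboundaries₂_iff_exists_section f).1 hf
  have hbase : (s g).base = g := DFunLike.congr_fun hs g
  have hpow : s g ^ m = 1 := by rw [← map_pow, hg, map_one]
  rw [CocycleExtension.pow_eq_one_iff, hbase] at hpow
  exact ⟨(s g).fiber, hpow.1⟩

/-- The cup product of a `k`-valued and an `A`-valued character, as a 2-cocycle. -/
def cupProduct (χ : Additive G →+ k) (ψ : Additive G →+ A) : cocycles₂ A :=
  ⟨fun p => χ (.ofMul p.1) • ψ (.ofMul p.2), (mem_cocycles₂_iff _).2 fun g h j => by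
    simp only [ofMul_mul, map_add, Representation.isTrivial_apply, add_smul, smul_add]
    abel⟩

lemma powerObstruction_cupProduct (χ : Additive G →+ k) (ψ : Additive G →+ A) (g : G) (m : ℕ) :
    powerObstruction A g m (cupProduct χ ψ) =
      m.choose 2 • (χ (.ofMul g) • ψ (.ofMul g)) := by
  change ∑ j ∈ Finset.range m, χ (.ofMul (g ^ j)) • ψ (.ofMul g) = _
  simp only [ofMul_pow, map_nsmul, smul_assoc]
  rw [← Finset.sum_smul, Finset.sum_range_id, Nat.choose_two_right]

end Extension

section Presentation

open DihedralGroup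

variable {N : ℕ} {E : Type*} [Group E]

/-- The homomorphism from the cyclic group of order `N` sending the generator to `R`. -/
def rotationHom (R : E) (hR : R ^ N = 1) : Multiplicative (ZMod N) →* E :=
  AddMonoidHom.toMultiplicativeLeft <|
    ZMod.lift N ⟨zmultiplesHom (Additive E) (.ofMul R), by simp [← ofMul_pow, hR]⟩

lemma rotationHom_intCast {R : E} (hR : R ^ N = 1) (i : ℤ) :
    rotationHom R hR (.ofAdd (i : ZMod N)) = R ^ i := by
  simp [rotationHom]

lemma semiconjBy_rotationHom {R S : E} (hR : R ^ N = 1) (hS : S ^ 2 = 1) (hSR : (S * R) ^ 2 = 1)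
    (i : ZMod N) :
    SemiconjBy S (rotationHom R hR (.ofAdd i)) (rotationHom R hR (.ofAdd (-i))) := by
  have hSinv : S⁻¹ = S := inv_eq_of_mul_eq_one_left (by rwa [← sq])
  have hconj : SemiconjBy S R R⁻¹ :=
    calc S * R = (S * R)⁻¹ := eq_inv_of_mul_eq_one_left (by rwa [← sq])
      _ = R⁻¹ * S := by rw [mul_inv_rev, hSinv]
  obtain ⟨i, rfl⟩ := ZMod.intCast_surjective i
  rw [← Int.cast_neg, rotationHom_intCast, rotationHom_intCast, ← inv_zpow']
  exact hconj.zpow_right i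

/-- The universal property of the presentation `⟨r, s | r ^ N = s ^ 2 = (s r) ^ 2 = 1⟩` of the
dihedral group, with `r 1` and `sr 0` as the generators `r` and `s`. -/
def dihedralLift (R S : E) (hR : R ^ N = 1) (hS : S ^ 2 = 1) (hSR : (S * R) ^ 2 = 1) :
    DihedralGroup N →* E :=
  MonoidHom.mk'
    (fun
      | r i => rotationHom R hR (.ofAdd i)
      | sr i => S * rotationHom R hR (.ofAdd i))
    (by
      have hswap (i : ZMod N) : rotationHom R hR (.ofAdd i) * S =
          S * rotationHom R hR (.ofAdd (-i)) := by
        simpa only [neg_neg] using (semiconjBy_rotationHom hR hS hSR (-i)).eq.symm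
      rintro (i | i) (j | j)
      · exact map_mul (rotationHom R hR) (.ofAdd i) (.ofAdd j)
      · simp only [r_mul_sr]
        rw [← mul_assoc, hswap, mul_assoc, ← map_mul, ← ofAdd_add, neg_add_eq_sub]
      · simp only [sr_mul_r]
        rw [mul_assoc, ← map_mul, ← ofAdd_add]
      · simp only [sr_mul_sr]
        rw [mul_assoc, ← mul_assoc (rotationHom R hR _), hswap, mul_assoc, ← mul_assoc S, ← sq, hS,
          one_mul, ← map_mul, ← ofAdd_add, neg_add_eq_sub])

lemma dihedralLift_r_one {R S : E} (hR : R ^ N = 1) (hS : S ^ 2 = 1) (hSR : (S * R) ^ 2 = 1) :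
    dihedralLift R S hR hS hSR (r 1) = R := by
  change rotationHom R hR (.ofAdd 1) = R
  simpa using rotationHom_intCast hR 1

lemma dihedralLift_sr_zero {R S : E} (hR : R ^ N = 1) (hS : S ^ 2 = 1)
    (hSR : (S * R) ^ 2 = 1) : dihedralLift R S hR hS hSR (sr 0) = S :=
  (congrArg (S * ·) (map_one (rotationHom R hR))).trans (mul_one S)

lemma dihedral_hom_ext {M : Type*} [Monoid M] {φ ψ : DihedralGroup N →* M}
    (hr : φ (r 1) = ψ (r 1)) (hs : φ (sr 0) = ψ (sr 0)) : φ = ψ := by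
  have hrot (i : ZMod N) : r i ∈ φ.eqLocus ψ := by
    obtain ⟨i, rfl⟩ := ZMod.intCast_surjective i
    exact r_one_zpow (n := N) i ▸ zpow_mem (K := φ.eqLocus ψ) hr i
  ext (i | i)
  · exact hrot i
  · have hsr : sr 0 * r i ∈ φ.eqLocus ψ := mul_mem hs (hrot i)
    rwa [sr_mul_r, zero_add] at hsr

end Presentation

section Carry

open DihedralGroup

variable {N : ℕ}

/-- The exponent of the rotation part, represented in `{0, …, N - 1}` when `N ≠ 0`. -/
def rotationIndex : DihedralGroup N → ℤ
  | r i => i.val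
  | sr i => i.val

/-- The sign by which an element acts on the rotations. -/
def dihedralSign : DihedralGroup N → ℤ
  | r _ => 1
  | sr _ => -1

lemma dihedralSign_mul (g h : DihedralGroup N) :
    dihedralSign (g * h) = dihedralSign g * dihedralSign h := by
  rcases g with i | i <;> rcases h with j | j <;> simp [dihedralSign]

lemma rotationIndex_one : rotationIndex (1 : DihedralGroup N) = 0 := by
  rw [one_def]
  simp [rotationIndex]

/-- The factor set of the extension `ℤ → D_∞ → D_N`, whose kernel is generated by the `N`-th power
of the rotation, with respect to the section given by `rotationIndex`. -/
def dihedralCarry (g h : DihedralGroup N) : ℤ :=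
  (rotationIndex h + dihedralSign h * rotationIndex g - rotationIndex (g * h)) / N

lemma dihedralCarry_one_left (g : DihedralGroup N) : dihedralCarry 1 g = 0 := by
  simp [dihedralCarry, rotationIndex_one]

lemma dihedralCarry_sr_self (i : ZMod N) : dihedralCarry (sr i) (sr i) = 0 := by
  simp only [dihedralCarry, sr_mul_self, rotationIndex_one]
  simp [dihedralSign]

variable [NeZero N]

lemma dvd_rotationIndex_defect (g h : DihedralGroup N) :
    (N : ℤ) ∣ rotationIndex h + dihedralSign h * rotationIndex g - rotationIndex (g * h) := by
  rw [← ZMod.intCast_zmod_eq_zero_iff_dvd]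
  rcases g with i | i <;> rcases h with j | j <;>
    simp only [rotationIndex, dihedralSign, r_mul_r, r_mul_sr, sr_mul_r, sr_mul_sr,
      Int.cast_sub, Int.cast_add, Int.cast_mul, Int.cast_neg, Int.cast_one, Int.cast_natCast,
      ZMod.natCast_zmod_val] <;>
    ring

lemma mul_dihedralCarry (g h : DihedralGroup N) :
    N * dihedralCarry g h =
      rotationIndex h + dihedralSign h * rotationIndex g - rotationIndex (g * h) :=
  Int.mul_ediv_cancel' (dvd_rotationIndex_defect g h)

lemma dihedralCarry_cocycle (g h j : DihedralGroup N) :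
    dihedralCarry (g * h) j + dihedralSign j * dihedralCarry g h =
      dihedralCarry h j + dihedralCarry g (h * j) := by
  apply mul_left_cancel₀ (Nat.cast_ne_zero.2 (NeZero.ne N) : (N : ℤ) ≠ 0)
  have hg_hj := mul_dihedralCarry g (h * j)
  rw [dihedralSign_mul, ← mul_assoc] at hg_hj
  linear_combination mul_dihedralCarry (g * h) j + dihedralSign j * mul_dihedralCarry g h -
    mul_dihedralCarry h j - hg_hj

lemma sum_dihedralCarry_r_one (hN : 1 < N) :
    ∑ j ∈ Finset.range N, dihedralCarry (r 1 ^ j) (r (1 : ZMod N)) = 1 := by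
  have : Fact (1 < N) := ⟨hN⟩
  apply mul_left_cancel₀ (Nat.cast_ne_zero.2 (NeZero.ne N) : (N : ℤ) ≠ 0)
  calc N * ∑ j ∈ Finset.range N, dihedralCarry (r 1 ^ j) (r (1 : ZMod N))
      = ∑ j ∈ Finset.range N, (1 - (rotationIndex (r (1 : ZMod N) ^ (j + 1)) -
          rotationIndex (r (1 : ZMod N) ^ j))) := by
        rw [Finset.mul_sum]
        refine Finset.sum_congr rfl fun j _ => ?_
        rw [mul_dihedralCarry, ← pow_succ]
        simp only [dihedralSign, rotationIndex, ZMod.val_one, Nat.cast_one]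
        ring
    _ = N * 1 := by
        rw [Finset.sum_sub_distrib,
          Finset.sum_range_sub fun j => rotationIndex (r (1 : ZMod N) ^ j)]
        simp [rotationIndex_one]

end Carry

section Cohomology

open groupCohomology DihedralGroup CocycleExtension

lemma even_nsmul_eq_zero (k : Type*) {M : Type*} [Semiring k] [CharP k 2] [AddCommMonoid M]
    [Module k M] {m : ℕ} (hm : Even m) (x : M) : m • x = 0 := by
  rw [← Nat.cast_smul_eq_nsmul k, (CharP.cast_eq_zero_iff k 2 m).2 hm.two_dvd, zero_smul]

variable {N : ℕ}

lemma intCast_dihedralSign (k : Type*) [Ring k] [CharP k 2] (g : DihedralGroup N) :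
    (dihedralSign g : k) = 1 := by
  rcases g with i | i <;> simp [dihedralSign, CharTwo.neg_eq]

lemma map_ofMul_sr_one {M : Type*} [AddMonoid M] (χ : Additive (DihedralGroup N) →+ M) :
    χ (.ofMul (sr 1)) = χ (.ofMul (sr 0)) + χ (.ofMul (r 1)) := by
  rw [← map_add, ← ofMul_mul, sr_mul_r, zero_add]

lemma exists_dihedral_character (k : Type*) {M : Type*} [Semiring k] [CharP k 2] [AddCommGroup M]
    [Module k M] (hN : Even N) (a b : M) : ∃ χ : Additive (DihedralGroup N) →+ M,
      χ (.ofMul (r 1)) = a ∧ χ (.ofMul (sr 0)) = b := by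
  let φ : DihedralGroup N →* Multiplicative M :=
    dihedralLift (.ofAdd a) (.ofAdd b)
      (congrArg Multiplicative.ofAdd (even_nsmul_eq_zero k hN a))
      (congrArg Multiplicative.ofAdd (even_nsmul_eq_zero k even_two b))
      (congrArg Multiplicative.ofAdd (even_nsmul_eq_zero k even_two (b + a)))
  exact ⟨MonoidHom.toAdditiveLeft φ, congrArg Multiplicative.toAdd (dihedralLift_r_one ..),
    congrArg Multiplicative.toAdd (dihedralLift_sr_zero ..)⟩

/-- Evaluation of characters at the generators. -/
def characterEval (N : ℕ) (k M : Type*) [Semiring k] [AddCommGroup M] [Module k M] :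
    (Additive (DihedralGroup N) →+ M) →ₗ[k] M × M where
  toFun χ := (χ (.ofMul (r 1)), χ (.ofMul (sr 0)))
  map_add' _ _ := rfl
  map_smul' _ _ := rfl

lemma characterEval_bijective (k M : Type*) [Semiring k] [CharP k 2] [AddCommGroup M]
    [Module k M] (hN : Even N) : Function.Bijective (characterEval N k M) := by
  constructor
  · intro χ ψ h
    obtain ⟨hr, hs⟩ := Prod.ext_iff.1 h
    apply AddMonoidHom.toMultiplicativeRight.injective
    exact dihedral_hom_ext (congrArg Multiplicative.ofAdd hr) (congrArg Multiplicative.ofAdd hs)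
  · rintro ⟨a, b⟩
    obtain ⟨χ, hr, hs⟩ := exists_dihedral_character k hN a b
    exact ⟨χ, Prod.ext hr hs⟩

variable {k : Type} [CommRing k] {A : Rep k (DihedralGroup N)}

/-- The obstructions to lifting the relations `s ^ 2 = (s r) ^ 2 = r ^ N = 1`. -/
def relationObstruction (A : Rep k (DihedralGroup N)) : cocycles₂ A →ₗ[k] A × A × A :=
  (powerObstruction A (sr 0) 2).prod
    ((powerObstruction A (sr 1) 2).prod (powerObstruction A (r 1) N))

variable [A.IsTrivial]

lemma relationObstruction_cupProduct (χ : Additive (DihedralGroup N) →+ k)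
    {ψ : Additive (DihedralGroup N) →+ A} (hψ : ψ (.ofMul (r 1)) = 0) :
    relationObstruction A (cupProduct χ ψ) =
      (χ (.ofMul (sr 0)) • ψ (.ofMul (sr 0)),
        (χ (.ofMul (sr 0)) + χ (.ofMul (r 1))) • ψ (.ofMul (sr 0)), 0) := by
  simp [relationObstruction, powerObstruction_cupProduct, map_ofMul_sr_one, hψ]

variable [CharP k 2]

lemma powerObstruction_eq_zero_of_mem_coboundaries₂ {f : cocycles₂ A}
    (hf : ⇑f ∈ coboundaries₂ A) {g : DihedralGroup N} {m : ℕ} (hm : Even m) (hg : g ^ m = 1) :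
    powerObstruction A g m f = 0 := by
  obtain ⟨a, ha⟩ := exists_nsmul_add_powerObstruction_eq_zero hf hg
  rwa [even_nsmul_eq_zero k hm, zero_add] at ha

lemma mem_coboundaries₂_of_relationObstruction_eq_zero {f : cocycles₂ A}
    (hf : relationObstruction A f = 0) : ⇑f ∈ coboundaries₂ A := by
  obtain ⟨hs, hsr, hr⟩ : powerObstruction A (sr 0) 2 f = 0 ∧
      powerObstruction A (sr 1) 2 f = 0 ∧ powerObstruction A (r 1) N f = 0 :=
    ⟨congrArg (·.1) hf, congrArg (·.2.1) hf, congrArg (·.2.2) hf⟩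
  let R : CocycleExtension f := ⟨0, r 1⟩
  let S : CocycleExtension f := ⟨0, sr 0⟩
  have hR : R ^ N = 1 := (CocycleExtension.pow_eq_one_iff _ _).2 ⟨by simp [R, hr], r_one_pow_n⟩
  have hS : S ^ 2 = 1 := (CocycleExtension.pow_eq_one_iff _ _).2 ⟨by simp [S, hs], by simp [S, sq]⟩
  have hbase : (S * R).base = sr 1 := by simp [S, R, mul_base]
  have hSR : (S * R) ^ 2 = 1 := by
    rw [CocycleExtension.pow_eq_one_iff, hbase, hsr, even_nsmul_eq_zero k even_two, zero_add]
    exact ⟨rfl, by simp [sq]⟩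
  refine (mem_coboundaries₂_iff_exists_section f).2 ⟨dihedralLift R S hR hS hSR, ?_⟩
  exact dihedral_hom_ext (congrArg base (dihedralLift_r_one hR hS hSR))
    (congrArg base (dihedralLift_sr_zero hR hS hSR))

theorem mem_coboundaries₂_iff_relationObstruction_eq_zero (hN : Even N) (f : cocycles₂ A) :
    ⇑f ∈ coboundaries₂ A ↔ relationObstruction A f = 0 := by
  refine ⟨fun hf => ?_, mem_coboundaries₂_of_relationObstruction_eq_zero⟩
  have hsq (i : ZMod N) : sr i ^ 2 = 1 := by rw [sq, sr_mul_self]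
  exact Prod.ext (powerObstruction_eq_zero_of_mem_coboundaries₂ hf even_two (hsq 0))
    (Prod.ext (powerObstruction_eq_zero_of_mem_coboundaries₂ hf even_two (hsq 1))
      (powerObstruction_eq_zero_of_mem_coboundaries₂ hf hN r_one_pow_n))

lemma exists_relationObstruction_eq_fst_snd (hN : Even N) (a b : A) :
    ∃ f : cocycles₂ A, relationObstruction A f = (a, b, 0) := by
  obtain ⟨χ, hχr, hχs⟩ := exists_dihedral_character k hN (1 : k) 0
  obtain ⟨ω, hωr, hωs⟩ := exists_dihedral_character k hN (1 : k) 1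
  obtain ⟨α, hαr, hαs⟩ := exists_dihedral_character k hN 0 a
  obtain ⟨β, hβr, hβs⟩ := exists_dihedral_character k hN 0 b
  refine ⟨cupProduct ω α + cupProduct χ β, ?_⟩
  rw [map_add, relationObstruction_cupProduct ω hαr, relationObstruction_cupProduct χ hβr,
    hωr, hωs, hχr, hχs, hαs, hβs]
  simp [CharTwo.add_self_eq_zero]

variable [NeZero N]

/-- The reduction of `dihedralCarry` mod `2`, with values in the multiples of `c`. -/
def carryCocycle (c : A) : cocycles₂ A :=
  ⟨fun p => (dihedralCarry p.1 p.2 : k) • c, (mem_cocycles₂_iff _).2 fun g h j => by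
    have hcarry := congrArg (Int.cast : ℤ → k) (dihedralCarry_cocycle g h j)
    push_cast [intCast_dihedralSign, one_mul] at hcarry
    rw [Representation.isTrivial_apply, ← add_smul, ← add_smul, hcarry]⟩

lemma relationObstruction_carryCocycle (hN : 1 < N) (c : A) :
    relationObstruction A (carryCocycle c) = (0, 0, c) := by
  have happ (g h : DihedralGroup N) :
      carryCocycle c (g, h) = (dihedralCarry g h : k) • c := rfl
  have hs (i : ZMod N) : powerObstruction A (sr i) 2 (carryCocycle c) = 0 := by
    simp [powerObstruction_two, happ, dihedralCarry_one_left, dihedralCarry_sr_self]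
  have hr : powerObstruction A (r 1) N (carryCocycle c) = c := by
    simp only [powerObstruction_apply, happ]
    rw [← Finset.sum_smul, ← Int.cast_sum, sum_dihedralCarry_r_one hN, Int.cast_one, one_smul]
  exact Prod.ext (hs 0) (Prod.ext (hs 1) hr)

theorem relationObstruction_surjective (hN : Even N) :
    Function.Surjective (relationObstruction A) := by
  rintro ⟨a, b, c⟩
  obtain ⟨f, hf⟩ := exists_relationObstruction_eq_fst_snd hN a b
  have hN_lt : 1 < N := Nat.le_of_dvd (NeZero.pos N) hN.two_dvd
  refine ⟨f + carryCocycle c, ?_⟩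
  rw [map_add, hf, relationObstruction_carryCocycle hN_lt]
  simp

theorem nonempty_H2_linearEquiv (A : Rep k (DihedralGroup N)) [A.IsTrivial] (hN : Even N) :
    Nonempty (H2 A ≃ₗ[k] A × A × A) := by
  have hπ : Function.Surjective (H2π A).hom := (ModuleCat.epi_iff_surjective _).1 inferInstance
  have hker : LinearMap.ker (H2π A).hom = LinearMap.ker (relationObstruction A) := by
    ext f
    exact (H2π_eq_zero_iff f).trans (mem_coboundaries₂_iff_relationObstruction_eq_zero hN f)
  exact ⟨((H2π A).hom.quotKerEquivOfSurjective hπ).symm ≪≫ₗ Submodule.quotEquivOfEq _ _ hker ≪≫ₗ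
    (relationObstruction A).quotKerEquivOfSurjective (relationObstruction_surjective hN)⟩

theorem cohomology_dihedral_F2_general (A : Rep k (DihedralGroup N)) [A.IsTrivial] (hN : Even N) :
    Nonempty (H0 A ≃ₗ[k] A) ∧ Nonempty (H1 A ≃ₗ[k] A × A) ∧
      Nonempty (H2 A ≃ₗ[k] A × A × A) :=
  ⟨⟨(H0IsoOfIsTrivial A).toLinearEquiv⟩,
    ⟨(H1IsoOfIsTrivial A).toLinearEquiv ≪≫ₗ .ofBijective _ (characterEval_bijective k A hN)⟩,
    nonempty_H2_linearEquiv A hN⟩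

end Cohomology

/- `D_{4n}` is `DihedralGroup (2n)` (Mathlib's `DihedralGroup N` has order `2N`),
and `𝔽₂ = ZMod 2` with the trivial `D_{4n}`-action is `Rep.trivial (ZMod 2) _ (ZMod 2)`. -/

/-- The group cohomology of the dihedral group of order `4n` with coefficients in the
trivial module `𝔽₂` has `𝔽₂`-dimensions `1`, `2`, `3` in degrees `0`, `1`, `2`. -/
theorem cohomology_dihedral_F2 (n : ℕ) (hn : 1 ≤ n) :
    Module.finrank (ZMod 2)
      (groupCohomology (Rep.trivial (ZMod 2) (DihedralGroup (2 * n)) (ZMod 2)) 0) = 1 ∧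
    Module.finrank (ZMod 2)
      (groupCohomology (Rep.trivial (ZMod 2) (DihedralGroup (2 * n)) (ZMod 2)) 1) = 2 ∧
    Module.finrank (ZMod 2)
      (groupCohomology (Rep.trivial (ZMod 2) (DihedralGroup (2 * n)) (ZMod 2)) 2) = 3 := by
  have : NeZero (2 * n) := ⟨by lia⟩
  obtain ⟨⟨e₀⟩, ⟨e₁⟩, ⟨e₂⟩⟩ := cohomology_dihedral_F2_general
    (Rep.trivial (ZMod 2) (DihedralGroup (2 * n)) (ZMod 2)) (even_two_mul n)
  exact ⟨by simp [e₀.finrank_eq], by simp [e₁.finrank_eq], by simp [e₂.finrank_eq]⟩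
end
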